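/- Let L > 0. There exist λ ∈ ℂ and three times continuously differentiable functions θ, u : [0,L] → ℂ, not both identically zero, satisfying −u′(x) − u‴(x) = λ·θ(x) and −θ′(x) − θ‴(x) = λ·u(x) for all x ∈ [0,L], with boundary conditions θ(0) = θ(L) = θ′(0) = θ″(L) = 0 and u(0) = u(L) = u′(L) = 0, together with the additional condition u″(0) = 0, if and only if L ∈ ℛ. -/

import Mathlib

open Set

/-- The set 𝒩 = { (2π/√3)·√(k² + k·l + l²) : k, l positive integers }. -/
def criticalN : Set ℝ :=
  {x | ∃ k l : ℕ, 0 < k ∧ 0 < l ∧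
    x = (2 * Real.pi / Real.sqrt 3) * Real.sqrt ((k : ℝ)^2 + (k : ℝ) * (l : ℝ) + (l : ℝ)^2)}

/-- The set ℛ = { π·√((1/2+2k)² + (1/2+2l)² + (1/2+2k)(1/2+2l)) : k, l ∈ ℤ, k ≠ l }. -/
def criticalR : Set ℝ :=
  {x | ∃ k l : ℤ, k ≠ l ∧
    x = Real.pi * Real.sqrt ((1/2 + 2*(k : ℝ))^2 + (1/2 + 2*(l : ℝ))^2
      + (1/2 + 2*(k : ℝ)) * (1/2 + 2*(l : ℝ)))}

/-- The set 𝒩₃ = { (2π/√3)·√(k² + k·l + l²) : k, l positive integers, 3 ∣ 2k + l }. -/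
def criticalN3 : Set ℝ :=
  {x | ∃ k l : ℕ, 0 < k ∧ 0 < l ∧ 3 ∣ 2 * k + l ∧
    x = (2 * Real.pi / Real.sqrt 3) * Real.sqrt ((k : ℝ)^2 + (k : ℝ) * (l : ℝ) + (l : ℝ)^2)}

lemma aux_exp {L : ℝ} {g : ℝ → ℂ} {m : ℂ}
    (h : ∀ x ∈ Icc (0:ℝ) L, HasDerivAt g (m * g x) x) :
    ∀ x ∈ Icc (0:ℝ) L, g x = Complex.exp (m * x) * g 0 := by
  have he : ∀ x : ℝ, HasDerivAt (fun x : ℝ => Complex.exp (-m * x))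
      (Complex.exp (-m * x) * (-m * 1)) x := by
    intro x
    have h1 : HasDerivAt (fun x : ℝ => -m * (x:ℂ)) (-m * 1) x :=
      (Complex.ofRealCLM.hasDerivAt (x := x)).const_mul (-m)
    exact h1.cexp
  have hd : ∀ x ∈ Icc (0:ℝ) L, HasDerivAt (fun x : ℝ => Complex.exp (-m * x) * g x) 0 x := by
    intro x hx
    have := (he x).mul (h x hx)
    refine this.congr_deriv (Eq.symm ?_)
    ring
  have hc := constant_of_has_deriv_right_zero
    (fun x hx => (hd x hx).continuousAt.continuousWithinAt)
    (fun x hx => (hd x (Ico_subset_Icc_self hx)).hasDerivWithinAt)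
  intro x hx
  have h2 := hc x hx
  simp only [Complex.ofReal_zero, mul_zero, Complex.exp_zero, one_mul] at h2
  rw [← h2, ← mul_assoc, ← Complex.exp_add]
  simp

/-- `v0` solves the third order equation on `[0,L]` with derivatives `v1`, `v2`. -/
def IsSol (L : ℝ) (lam : ℂ) (v0 v1 v2 : ℝ → ℂ) : Prop :=
  (∀ x ∈ Icc (0:ℝ) L, HasDerivAt v0 (v1 x) x) ∧ (∀ x ∈ Icc (0:ℝ) L, HasDerivAt v1 (v2 x) x) ∧
  (∀ x ∈ Icc (0:ℝ) L, HasDerivAt v2 (-v1 x - lam * v0 x) x)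

lemma aux_phi {L : ℝ} {lam : ℂ} {v0 v1 v2 : ℝ → ℂ} (h : IsSol L lam v0 v1 v2) {m : ℂ}
    (hm : m ^ 3 + m + lam = 0) : ∀ x ∈ Icc (0:ℝ) L,
    v2 x + m * v1 x + (m ^ 2 + 1) * v0 x
      = Complex.exp (m * x) * (v2 0 + m * v1 0 + (m ^ 2 + 1) * v0 0) := by
  apply aux_exp (g := fun x => v2 x + m * v1 x + (m ^ 2 + 1) * v0 x)
  intro x hx
  have := ((h.2.2 x hx).add ((h.2.1 x hx).const_mul m)).add ((h.1 x hx).const_mul (m ^ 2 + 1))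
  refine this.congr_deriv (Eq.symm ?_)
  linear_combination (v0 x) * hm

/-- extra functional at a double root -/
lemma aux_psi {L : ℝ} {lam : ℂ} {v0 v1 v2 : ℝ → ℂ} (h : IsSol L lam v0 v1 v2) {m : ℂ}
    (hm : m ^ 3 + m + lam = 0) (hm2 : 3 * m ^ 2 + 1 = 0) : ∀ x ∈ Icc (0:ℝ) L,
    v1 x + 2 * m * v0 x = Complex.exp (m * x) * ((v1 0 + 2 * m * v0 0) +
      x * (v2 0 + m * v1 0 + (m ^ 2 + 1) * v0 0)) := by
  have key := aux_exp (L := L) (m := m) (g := fun x => v1 x + 2 * m * v0 x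
    - x * (v2 x + m * v1 x + (m ^ 2 + 1) * v0 x)) (by
    intro x hx
    have h1 := ((h.2.2 x hx).add ((h.2.1 x hx).const_mul m)).add
      ((h.1 x hx).const_mul (m ^ 2 + 1))
    have h2 := (Complex.ofRealCLM.hasDerivAt (x := x)).mul h1
    have h3 := ((h.2.1 x hx).add ((h.1 x hx).const_mul (2 * m))).sub h2
    refine h3.congr_deriv (Eq.symm ?_)
    simp only [Complex.ofRealCLM_apply, Complex.ofReal_one, Pi.add_apply]
    linear_combination (-(x:ℂ) * v0 x) * hm + v0 x * hm2)
  intro x hx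
  have h1 := key x hx
  have h2 := aux_phi h hm x hx
  simp only [Complex.ofReal_zero] at h1
  linear_combination h1 + x * h2

lemma aux_zero {L : ℝ} {lam : ℂ} {v0 v1 v2 : ℝ → ℂ} (h : IsSol L lam v0 v1 v2) {p q r : ℂ}
    (h1 : p + q + r = 0) (h2 : p * q + p * r + q * r = 1) (h3 : p * q * r = -lam)
    (h0 : v0 0 = 0) (h01 : v1 0 = 0) (h02 : v2 0 = 0) : ∀ x ∈ Icc (0:ℝ) L, v0 x = 0 := by
  have hp : p ^ 3 + p + lam = 0 := by
    linear_combination p ^ 2 * h1 - p * h2 + h3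
  have e1 := aux_phi h hp
  simp only [h0, h01, h02, mul_zero, add_zero] at e1
  have e2 := aux_exp (L := L) (m := r) (g := fun x => v1 x - q * v0 x) (by
    intro x hx
    have := (h.2.1 x hx).sub ((h.1 x hx).const_mul q)
    refine this.congr_deriv (Eq.symm ?_)
    linear_combination (-1) * e1 x hx + (v1 x) * h1 + (p * v0 x) * h1 - v0 x * h2)
  simp only [h0, h01, mul_zero, sub_zero] at e2
  have e3 := aux_exp (L := L) (m := q) (g := v0) (by
    intro x hx
    have := h.1 x hx
    refine this.congr_deriv (Eq.symm ?_)
    linear_combination (-1) * e2 x hx)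
  simpa [h0] using e3

lemma exists_roots (lam : ℂ) : ∃ p q r : ℂ,
    p + q + r = 0 ∧ p * q + p * r + q * r = 1 ∧ p * q * r = -lam := by
  obtain ⟨p, hp⟩ : ∃ p : ℂ, p ^ 3 + p + lam = 0 := by
    have hdeg : (Polynomial.X ^ 3 + Polynomial.X + Polynomial.C lam : Polynomial ℂ).degree = 3 := by
      compute_degree!
    obtain ⟨p, hp⟩ := IsAlgClosed.exists_root
      (Polynomial.X ^ 3 + Polynomial.X + Polynomial.C lam : Polynomial ℂ) (by
        rw [hdeg]; norm_num)
    exact ⟨p, by simpa [Polynomial.IsRoot] using hp⟩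
  obtain ⟨s, hs⟩ := IsAlgClosed.exists_pow_nat_eq (-3 * p ^ 2 - 4) (n := 2) (by norm_num)
  refine ⟨p, (-p + s) / 2, (-p - s) / 2, by ring, ?_, ?_⟩
  · linear_combination (-1 / 4) * hs
  · linear_combination (-p / 4) * hs + hp

lemma aux_final_I {L : ℝ} (hL : 0 < L) {p q : ℂ} (hpq : p ≠ q)
    (hr : p ^ 2 + p * q + q ^ 2 + 1 = 0) (hp : Complex.exp (p * L) = Complex.I)
    (hq : Complex.exp (q * L) = Complex.I) : L ∈ criticalR := by
  rw [← Complex.exp_pi_div_two_mul_I, Complex.exp_eq_exp_iff_exists_int] at hp hq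
  obtain ⟨k, hk⟩ := hp
  obtain ⟨l, hl⟩ := hq
  have hLc : (L:ℂ) ≠ 0 := by exact_mod_cast hL.ne'
  refine ⟨k, l, ?_, ?_⟩
  · rintro rfl
    exact hpq (mul_right_cancel₀ hLc (hk.trans hl.symm))
  · have key : (L:ℂ) ^ 2 = (Real.pi:ℂ) ^ 2 * ((1/2 + 2*(k : ℂ))^2 + (1/2 + 2*(l : ℂ))^2
      + (1/2 + 2*(k : ℂ)) * (1/2 + 2*(l : ℂ))) := by
      have h1 : p * L = Complex.I * (Real.pi * (1/2 + 2*(k : ℂ))) := by rw [hk]; ring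
      have h2 : q * L = Complex.I * (Real.pi * (1/2 + 2*(l : ℂ))) := by rw [hl]; ring
      have h3 : (p * L) ^ 2 + (p * L) * (q * L) + (q * L) ^ 2 + L ^ 2 = 0 := by
        linear_combination (L:ℂ) ^ 2 * hr
      rw [h1, h2] at h3
      linear_combination h3 - (Real.pi:ℂ) ^ 2 * ((1/2 + 2*(k : ℂ))^2 + (1/2 + 2*(l : ℂ))^2
        + (1/2 + 2*(k : ℂ)) * (1/2 + 2*(l : ℂ))) * Complex.I_sq
    have key' : L ^ 2 = Real.pi ^ 2 * ((1/2 + 2*(k : ℝ))^2 + (1/2 + 2*(l : ℝ))^2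
      + (1/2 + 2*(k : ℝ)) * (1/2 + 2*(l : ℝ))) := by
      apply Complex.ofReal_injective
      push_cast
      exact key
    rw [← Real.sqrt_sq hL.le, key', Real.sqrt_mul (by positivity), Real.sqrt_sq Real.pi_pos.le]

lemma aux_final {L : ℝ} (hL : 0 < L) {p q : ℂ} (hpq : p ≠ q)
    (hr : p ^ 2 + p * q + q ^ 2 + 1 = 0) (hp : Complex.exp (p * L) ^ 2 = -1)
    (hq : Complex.exp (q * L) = Complex.exp (p * L)) : L ∈ criticalR := by
  have : (Complex.exp (p * L) - Complex.I) * (Complex.exp (p * L) + Complex.I) = 0 := by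
    linear_combination hp - Complex.I_sq
  rcases mul_eq_zero.1 this with h | h
  · have hneg := sub_eq_zero.1 h
    exact aux_final_I hL hpq hr hneg (hq.trans hneg)
  · have hneg := eq_neg_of_add_eq_zero_left h
    apply aux_final_I hL (p := -p) (q := -q) (by simpa using hpq) (by linear_combination hr)
    · rw [neg_mul, Complex.exp_neg, hneg]; simp
    · rw [neg_mul, Complex.exp_neg, hq, hneg]; simp

/-- one root is killed, the other two have different exponentials -/
lemma aux_alg {a b c d p q r E F : ℂ} (hpr : p ≠ r) (hqr : q ≠ r) (hE : E ≠ F)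
    (hr : a + r * b = 0) (hr' : c + r * d = 0) (hp : c + p * d = E * (a + p * b))
    (hq : c + q * d = F * (a + q * b)) : a = 0 ∧ b = 0 := by
  have h1 : d = E * b := by
    apply mul_left_cancel₀ (sub_ne_zero.2 hpr)
    linear_combination hp - hr' + E * hr
  have h2 : d = F * b := by
    apply mul_left_cancel₀ (sub_ne_zero.2 hqr)
    linear_combination hq - hr' + F * hr
  have h3 : b = 0 := by
    apply mul_left_cancel₀ (sub_ne_zero.2 hE)
    linear_combination h2 - h1
  exact ⟨by simpa [h3] using hr, h3⟩

/-- double root is impossible -/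
lemma aux_double {a b c d p r L E F : ℂ} (hL : L ≠ 0) (hpr : p ≠ r) (hEF : F * E ^ 2 = 1)
    (hE0 : E ≠ 0) (hp1 : c + p * d = E * (a + p * b)) (hp2 : a + p * b = -E * (c + p * d))
    (hr1 : c + r * d = F * (a + r * b)) (hr2 : a + r * b = -F * (c + r * d))
    (hd : d = E * (b + L * (a + p * b))) (hb : b = -E * (d + L * (c + p * d))) :
    a = 0 ∧ b = 0 := by
  have hA : a + p * b = 0 := by
    by_contra hA
    have hE2 : E ^ 2 = -1 := by
      apply mul_right_cancel₀ hA
      linear_combination (-E) * hp1 + hp2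
    have : 2 * E * L * (a + p * b) = 0 := by
      linear_combination (-1) * hd - E * hb + E ^ 2 * L * hp1
        + (d + E * L * (a + p * b)) * hE2
    simp [hL, hE0] at this
    exact hA this
  have hB : c + p * d = 0 := by rw [hp1, hA, mul_zero]
  rw [hA, mul_zero, add_zero] at hd
  rw [hB, mul_zero, add_zero] at hb
  have hb0 : b = 0 := by
    by_contra hb0
    have hE2 : E ^ 2 = -1 := by
      apply mul_right_cancel₀ hb0
      linear_combination (-E) * hd + hb
    have hF : F = -1 := by linear_combination F * hE2 - hEF
    have h0 : a + r * b = 0 := by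
      rw [hF] at hr1 hr2
      linear_combination (1/2) * hr1 + (1/2) * hr2
    have : (p - r) * b = 0 := by linear_combination hA - h0
    rcases mul_eq_zero.1 this with h | h
    · exact hpr (sub_eq_zero.1 h)
    · exact hb0 h
  exact ⟨by simpa [hb0] using hA, hb0⟩

lemma aux_main {L : ℝ} (hL : 0 < L) {lam : ℂ} {v0 v1 v2 z0 z1 z2 : ℝ → ℂ}
    (hv : IsSol L lam v0 v1 v2) (hz : IsSol L lam z0 z1 z2)
    (v00 : v0 0 = 0) (v0L : v0 L = 0) (z00 : z0 0 = 0) (z0L : z0 L = 0)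
    (z10 : z1 0 = -v1 L) (z20 : z2 0 = -v2 L) (z1L : z1 L = v1 0) (z2L : z2 L = v2 0)
    (hne : ¬ ∀ x ∈ Icc (0:ℝ) L, v0 x = 0 ∧ z0 x = 0) : L ∈ criticalR := by
  obtain ⟨p, q, r, h1, h2, h3⟩ := exists_roots lam
  have hLm : L ∈ Icc (0:ℝ) L := ⟨hL.le, le_rfl⟩
  have hLc : (L:ℂ) ≠ 0 := by exact_mod_cast hL.ne'
  have hroot : ∀ m : ℂ, m ^ 3 + m + lam = 0 →
      v2 L + m * v1 L = Complex.exp (m * L) * (v2 0 + m * v1 0) ∧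
      v2 0 + m * v1 0 = -Complex.exp (m * L) * (v2 L + m * v1 L) := by
    intro m hm
    have e1 := aux_phi hv hm L hLm
    have e2 := aux_phi hz hm L hLm
    rw [v00, v0L] at e1
    rw [z00, z0L, z10, z20, z1L, z2L] at e2
    exact ⟨by linear_combination e1, by linear_combination e2⟩
  have hnz : ¬ (v2 0 = 0 ∧ v1 0 = 0) := by
    rintro ⟨ha, hb⟩
    have hvz := aux_zero hv h1 h2 h3 v00 hb ha
    apply hne
    have hzz : ∀ x ∈ Icc (0:ℝ) L, z0 (L - x) = 0 := by
      -- reversed solution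
      have hrev : IsSol L (-lam) (fun x => z0 (L - x)) (fun x => -z1 (L - x))
          (fun x => z2 (L - x)) := by
        have hs : ∀ x : ℝ, HasDerivAt (fun x : ℝ => L - x) (-1) x := fun x => by
          simpa using (hasDerivAt_id x).const_sub L
        have hI : ∀ x ∈ Icc (0:ℝ) L, L - x ∈ Icc (0:ℝ) L := fun x hx =>
          ⟨by linarith [hx.2], by linarith [hx.1]⟩
        refine ⟨fun x hx => ?_, fun x hx => ?_, fun x hx => ?_⟩
        · have := (hz.1 _ (hI x hx)).scomp x (hs x)
          refine this.congr_deriv (Eq.symm ?_)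
          simp
        · have := ((hz.2.1 _ (hI x hx)).scomp x (hs x)).neg
          refine this.congr_deriv (Eq.symm ?_)
          simp
        · have := (hz.2.2 _ (hI x hx)).scomp x (hs x)
          refine this.congr_deriv (Eq.symm ?_)
          simp only [neg_smul, one_smul]
          ring
      refine aux_zero hrev (p := -p) (q := -q) (r := -r) (by linear_combination -h1)
        (by linear_combination h2) (by linear_combination -h3) ?_ ?_ ?_
      · simpa using z0L
      · simp [z1L, hb]
      · simp [z2L, ha]
    intro x hx
    refine ⟨hvz x hx, ?_⟩
    have := hzz (L - x) ⟨by linarith [hx.2], by linarith [hx.1]⟩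
    simpa using this
  have hp : p ^ 3 + p + lam = 0 := by linear_combination p ^ 2 * h1 - p * h2 + h3
  have hq : q ^ 3 + q + lam = 0 := by linear_combination q ^ 2 * h1 - q * h2 + h3
  have hr : r ^ 3 + r + lam = 0 := by linear_combination r ^ 2 * h1 - r * h2 + h3
  have hdbl : ∀ m n : ℂ, m + m + n = 0 → m * m + m * n + m * n = 1 → m ^ 3 + m + lam = 0 →
      n ^ 3 + n + lam = 0 → False := by
    intro m n e1 e2 hm hn
    have hm2 : 3 * m ^ 2 + 1 = 0 := by linear_combination 2 * m * e1 - e2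
    have s1 := aux_psi hv hm hm2 L hLm
    have s2 := aux_psi hz hm hm2 L hLm
    rw [v00, v0L] at s1
    rw [z00, z0L, z10, z20, z1L] at s2
    refine hnz (aux_double (c := v2 L) (d := v1 L) (p := m) (r := n) (L := L)
      (E := Complex.exp (m * L)) (F := Complex.exp (n * L)) hLc ?_ ?_
      (Complex.exp_ne_zero _) (hroot m hm).1 (hroot m hm).2 (hroot n hn).1 (hroot n hn).2 ?_ ?_)
    · rintro rfl
      have : m = 0 := by linear_combination (1/3) * e1
      simp [this] at e2
    · rw [← Complex.exp_nat_mul, ← Complex.exp_add, ← Complex.exp_zero]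
      congr 1
      push_cast
      linear_combination (L:ℂ) * e1
    · linear_combination s1
    · linear_combination s2
  have hpq : p ≠ q := by
    rintro rfl
    exact hdbl p r h1 (by linear_combination h2) hp hr
  have hpr : p ≠ r := by
    rintro rfl
    exact hdbl p q (by linear_combination h1) (by linear_combination h2) hp hq
  have hqr : q ≠ r := by
    rintro rfl
    exact hdbl q p (by linear_combination h1) (by linear_combination h2) hq hp
  have hsq : ∀ m : ℂ, m ^ 3 + m + lam = 0 → v2 0 + m * v1 0 ≠ 0 →
      Complex.exp (m * L) ^ 2 = -1 := by
    intro m hm hA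
    apply mul_right_cancel₀ hA
    linear_combination (-Complex.exp (m * L)) * (hroot m hm).1 + (hroot m hm).2
  have hz2 : ∀ m n : ℂ, m ≠ n → v2 0 + m * v1 0 = 0 → v2 0 + n * v1 0 ≠ 0 := by
    intro m n hmn e1 e2
    have hb : v1 0 = 0 := by
      apply mul_left_cancel₀ (sub_ne_zero.2 hmn)
      linear_combination e1 - e2
    exact hnz ⟨by simpa [hb] using e1, hb⟩
  have hone : ∀ m n k : ℂ, m ≠ n → m ≠ k → n ≠ k → m + n + k = 0 → m * n + m * k + n * k = 1 →
      m ^ 3 + m + lam = 0 → n ^ 3 + n + lam = 0 → k ^ 3 + k + lam = 0 →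
      v2 0 + k * v1 0 = 0 → L ∈ criticalR := by
    intro m n k hmn hmk hnk e1 e2 hm hn hk hA
    have hAm := hz2 k m hmk.symm hA
    by_cases hE : Complex.exp (n * L) = Complex.exp (m * L)
    · exact aux_final hL hmn (by linear_combination (m + n) * e1 - e2) (hsq m hm hAm) hE
    · exfalso
      refine hnz (aux_alg hmk hnk (Ne.symm hE) hA ?_ (hroot m hm).1 (hroot n hn).1)
      rw [(hroot k hk).1, hA, mul_zero]
  by_cases hAp : v2 0 + p * v1 0 = 0
  · exact hone q r p hqr hpq.symm hpr.symm (by linear_combination h1) (by linear_combination h2)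
      hq hr hp hAp
  by_cases hAq : v2 0 + q * v1 0 = 0
  · exact hone p r q hpr hpq hqr.symm (by linear_combination h1) (by linear_combination h2)
      hp hr hq hAq
  by_cases hAr : v2 0 + r * v1 0 = 0
  · exact hone p q r hpq hpr hqr h1 h2 hp hq hr hAr
  have sp := hsq p hp hAp
  have sq := hsq q hq hAq
  have sr := hsq r hr hAr
  rcases sq_eq_sq_iff_eq_or_eq_neg.1 (sq.trans sp.symm) with h | h
  · exact aux_final hL hpq (by linear_combination (p + q) * h1 - h2) sp h
  rcases sq_eq_sq_iff_eq_or_eq_neg.1 (sr.trans sp.symm) with hneg | hneg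
  · exact aux_final hL hpr (by linear_combination (p + r) * h1 - h2) sp hneg
  · exact aux_final hL hqr (by linear_combination (q + r) * h1 - h2) sq (hneg.trans h.symm)

lemma aux_derivs {f : ℝ → ℂ} (hf : ContDiff ℝ 3 f) : (∀ x, HasDerivAt f (deriv f x) x) ∧
    (∀ x, HasDerivAt (deriv f) (deriv (deriv f) x) x) ∧
    (∀ x, HasDerivAt (deriv (deriv f)) (deriv (deriv (deriv f)) x) x) := by
  have h3 : ContDiff ℝ (2 + 1) f := by
    have : (2 + 1 : WithTop ℕ∞) = 3 := by norm_num
    rwa [this]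
  have h2 : ContDiff ℝ 2 (deriv f) := (contDiff_succ_iff_deriv.1 h3).2.2
  have h2' : ContDiff ℝ (1 + 1) (deriv f) := by
    have : (1 + 1 : WithTop ℕ∞) = 2 := by norm_num
    rwa [this]
  have h1 : ContDiff ℝ 1 (deriv (deriv f)) := (contDiff_succ_iff_deriv.1 h2').2.2
  exact ⟨fun x => (hf.differentiable (by norm_num) x).hasDerivAt,
    fun x => (h2.differentiable (by norm_num) x).hasDerivAt,
    fun x => (h1.differentiable (by norm_num) x).hasDerivAt⟩

lemma aux_forward {L : ℝ} (hL : 0 < L) {lam : ℂ} {θ u : ℝ → ℂ}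
    (hθ : ContDiff ℝ 3 θ) (hu : ContDiff ℝ 3 u)
    (hne : ¬(∀ x ∈ Icc (0 : ℝ) L, θ x = 0 ∧ u x = 0))
    (o1 : ∀ x ∈ Icc (0 : ℝ) L, -deriv u x - deriv (deriv (deriv u)) x = lam * θ x)
    (o2 : ∀ x ∈ Icc (0 : ℝ) L, -deriv θ x - deriv (deriv (deriv θ)) x = lam * u x)
    (b1 : θ 0 = 0) (b2 : θ L = 0) (b3 : deriv θ 0 = 0) (b4 : deriv (deriv θ) L = 0)
    (b5 : u 0 = 0) (b6 : u L = 0) (b7 : deriv u L = 0) (b8 : deriv (deriv u) 0 = 0) :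
    L ∈ criticalR := by
  obtain ⟨t1, t2, t3⟩ := aux_derivs hθ
  obtain ⟨u1, u2, u3⟩ := aux_derivs hu
  have hs : ∀ x : ℝ, HasDerivAt (fun x : ℝ => L - x) (-1) x := fun x => by
    simpa using (hasDerivAt_id x).const_sub L
  have hI : ∀ x ∈ Icc (0:ℝ) L, L - x ∈ Icc (0:ℝ) L := fun x hx =>
    ⟨by linarith [hx.2], by linarith [hx.1]⟩
  refine aux_main hL (lam := lam) (v0 := fun x => θ x + u x) (v1 := fun x => deriv θ x + deriv u x)
    (v2 := fun x => deriv (deriv θ) x + deriv (deriv u) x)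
    (z0 := fun x => θ (L - x) - u (L - x))
    (z1 := fun x => -(deriv θ (L - x) - deriv u (L - x)))
    (z2 := fun x => deriv (deriv θ) (L - x) - deriv (deriv u) (L - x))
    ⟨fun x _ => (t1 x).add (u1 x), fun x _ => (t2 x).add (u2 x), fun x hx => ?_⟩
    ⟨fun x hx => ?_, fun x hx => ?_, fun x hx => ?_⟩ ?_ ?_ ?_ ?_ ?_ ?_ ?_ ?_ ?_
  · have := (t3 x).add (u3 x)
    refine this.congr_deriv (Eq.symm ?_)
    linear_combination o1 x hx + o2 x hx
  · have := ((t1 (L - x)).sub (u1 (L - x))).scomp x (hs x)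
    refine this.congr_deriv (Eq.symm ?_)
    simp
  · have := (((t2 (L - x)).sub (u2 (L - x))).scomp x (hs x)).neg
    refine this.congr_deriv (Eq.symm ?_)
    simp
  · have := ((t3 (L - x)).sub (u3 (L - x))).scomp x (hs x)
    refine this.congr_deriv (Eq.symm ?_)
    simp only [neg_smul, one_smul]
    linear_combination o1 _ (hI x hx) - o2 _ (hI x hx)
  · simp [b1, b5]
  · simp [b2, b6]
  · simp [b2, b6]
  · simp [b1, b5]
  · simp [b7]
  · simp [b4]
  · simp [b3]
  · simp [b8]
  · intro h
    apply hne
    intro x hx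
    have e1 := (h x hx).1
    have e2 := (h _ (hI x hx)).2
    simp only [sub_sub_cancel] at e1 e2
    exact ⟨by linear_combination (1/2) * e1 + (1/2) * e2,
      by linear_combination (1/2) * e1 - (1/2) * e2⟩

/-- Combination of four exponentials used in the converse. -/
noncomputable def fourExp (A B C D p q : ℂ) (x : ℝ) : ℂ :=
  A * Complex.exp (p * x) + B * Complex.exp (q * x) + C * Complex.exp (-(p * x))
    + D * Complex.exp (-(q * x))

lemma fourExp_hasDerivAt (A B C D p q : ℂ) (x : ℝ) :
    HasDerivAt (fourExp A B C D p q) (fourExp (A * p) (B * q) (-C * p) (-D * q) p q x) x := by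
  have hl : ∀ m : ℂ, HasDerivAt (fun x : ℝ => m * (x:ℂ)) (m * 1) x := fun m =>
      (Complex.ofRealCLM.hasDerivAt (x := x)).const_mul m
  have := ((((hl p).cexp.const_mul A).add ((hl q).cexp.const_mul B)).add
    ((hl p).neg.cexp.const_mul C)).add ((hl q).neg.cexp.const_mul D)
  refine this.congr_deriv (Eq.symm ?_)
  simp only [fourExp, Pi.neg_apply]
  ring

lemma fourExp_deriv (A B C D p q : ℂ) :
    deriv (fourExp A B C D p q) = fourExp (A * p) (B * q) (-C * p) (-D * q) p q :=
  funext fun x => (fourExp_hasDerivAt A B C D p q x).deriv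

lemma fourExp_contDiff (A B C D p q : ℂ) : ContDiff ℝ 3 (fourExp A B C D p q) := by
  have h : ContDiff ℝ 3 (fun x : ℝ => (x:ℂ)) := Complex.ofRealCLM.contDiff
  have he : ∀ m : ℂ, ContDiff ℝ 3 (fun x : ℝ => m * (x:ℂ)) := fun m => contDiff_const.mul h
  exact (((contDiff_const.mul (he p).cexp).add (contDiff_const.mul (he q).cexp)).add
    (contDiff_const.mul (he p).neg.cexp)).add (contDiff_const.mul (he q).neg.cexp)

lemma fourExp_zero (A B C D p q : ℂ) : fourExp A B C D p q 0 = A + B + C + D := by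
  simp [fourExp]

lemma fourExp_L {p q : ℂ} {L : ℝ} (hp : Complex.exp (p * L) = Complex.I)
    (hq : Complex.exp (q * L) = Complex.I) (A B C D : ℂ) :
    fourExp A B C D p q L = Complex.I * (A + B - C - D) := by
  simp only [fourExp, Complex.exp_neg, hp, hq, Complex.inv_I]
  ring

theorem statement_7 (L : ℝ) (hL : 0 < L) :
    (∃ (lam : ℂ) (θ u : ℝ → ℂ),
      ContDiff ℝ 3 θ ∧ ContDiff ℝ 3 u ∧
      ¬(∀ x ∈ Icc (0 : ℝ) L, θ x = 0 ∧ u x = 0) ∧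
      (∀ x ∈ Icc (0 : ℝ) L, -deriv u x - deriv (deriv (deriv u)) x = lam * θ x) ∧
      (∀ x ∈ Icc (0 : ℝ) L, -deriv θ x - deriv (deriv (deriv θ)) x = lam * u x) ∧
      θ 0 = 0 ∧ θ L = 0 ∧ deriv θ 0 = 0 ∧ deriv (deriv θ) L = 0 ∧
      u 0 = 0 ∧ u L = 0 ∧ deriv u L = 0 ∧ deriv (deriv u) 0 = 0) ↔ L ∈ criticalR := by
  constructor
  · rintro ⟨lam, θ, u, hθ, hu, hne, o1, o2, b1, b2, b3, b4, b5, b6, b7, b8⟩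
    exact aux_forward hL hθ hu hne o1 o2 b1 b2 b3 b4 b5 b6 b7 b8
  · rintro ⟨k, l, hkl, hLe⟩
    have hLc : (L:ℂ) ≠ 0 := by exact_mod_cast hL.ne'
    obtain ⟨p, hp⟩ : ∃ p : ℂ, p * L = Real.pi / 2 * Complex.I + k * (2 * Real.pi * Complex.I) :=
      ⟨_, div_mul_cancel₀ _ hLc⟩
    obtain ⟨q, hq⟩ : ∃ q : ℂ, q * L = Real.pi / 2 * Complex.I + l * (2 * Real.pi * Complex.I) :=
      ⟨_, div_mul_cancel₀ _ hLc⟩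
    have ep : Complex.exp (p * L) = Complex.I := by
      rw [hp]
      exact (Complex.exp_eq_exp_iff_exists_int.2 ⟨k, rfl⟩).trans Complex.exp_pi_div_two_mul_I
    have eq : Complex.exp (q * L) = Complex.I := by
      rw [hq]
      exact (Complex.exp_eq_exp_iff_exists_int.2 ⟨l, rfl⟩).trans Complex.exp_pi_div_two_mul_I
    have hpq : p ≠ q := by
      rintro rfl
      apply hkl
      have h1 := hp.symm.trans hq
      have h2 := mul_right_cancel₀ Complex.two_pi_I_ne_zero (add_left_cancel h1)
      exact_mod_cast h2
    have hL2 : L ^ 2 = Real.pi ^ 2 * ((1/2 + 2*(k : ℝ))^2 + (1/2 + 2*(l : ℝ))^2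
        + (1/2 + 2*(k : ℝ)) * (1/2 + 2*(l : ℝ))) := by
      rw [hLe, mul_pow, Real.sq_sqrt]
      nlinarith [sq_nonneg ((1/2 + 2*(k : ℝ)) + (1/2 + 2*(l : ℝ))),
        sq_nonneg (1/2 + 2*(k : ℝ)), sq_nonneg (1/2 + 2*(l : ℝ))]
    have hL2c : (L:ℂ) ^ 2 = (Real.pi:ℂ) ^ 2 * ((1/2 + 2*(k : ℂ))^2 + (1/2 + 2*(l : ℂ))^2
        + (1/2 + 2*(k : ℂ)) * (1/2 + 2*(l : ℂ))) := by
      have := congrArg (fun t : ℝ => (t:ℂ)) hL2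
      push_cast at this
      exact this
    have hr : p ^ 2 + p * q + q ^ 2 + 1 = 0 := by
      apply mul_left_cancel₀ (pow_ne_zero 2 hLc)
      have h1 : p * L = Complex.I * (Real.pi * (1/2 + 2*(k : ℂ))) := by rw [hp]; ring
      have h2 : q * L = Complex.I * (Real.pi * (1/2 + 2*(l : ℂ))) := by rw [hq]; ring
      have h3 : (L:ℂ) ^ 2 * (p ^ 2 + p * q + q ^ 2 + 1)
          = (p * L) ^ 2 + (p * L) * (q * L) + (q * L) ^ 2 + L ^ 2 := by ring
      rw [h3, h1, h2]
      linear_combination hL2c + (Real.pi:ℂ) ^ 2 * ((1/2 + 2*(k : ℂ))^2 + (1/2 + 2*(l : ℂ))^2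
        + (1/2 + 2*(k : ℂ)) * (1/2 + 2*(l : ℂ))) * Complex.I_sq
    have hcub : p ^ 3 + p = q ^ 3 + q := by linear_combination (p - q) * hr
    refine ⟨-(p ^ 3 + p), fourExp 1 (-1) 1 (-1) p q, fourExp 1 (-1) (-1) 1 p q,
      fourExp_contDiff _ _ _ _ _ _, fourExp_contDiff _ _ _ _ _ _, ?_, ?_, ?_, ?_, ?_, ?_, ?_,
      ?_, ?_, ?_, ?_⟩
    · intro h
      have h0 : (0:ℝ) ∈ Icc (0:ℝ) L := ⟨le_rfl, hL.le⟩
      have d1 := ((fourExp_hasDerivAt 1 (-1) 1 (-1) p q 0).add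
        (fourExp_hasDerivAt 1 (-1) (-1) 1 p q 0)).hasDerivWithinAt (s := Icc (0:ℝ) L)
      have d2 : HasDerivWithinAt (fourExp 1 (-1) 1 (-1) p q + fourExp 1 (-1) (-1) 1 p q) 0
          (Icc (0:ℝ) L) 0 := by
        refine (hasDerivWithinAt_const (0:ℝ) (Icc (0:ℝ) L) (0:ℂ)).congr (fun x hx => ?_) ?_
        · simp [(h x hx).1, (h x hx).2]
        · simp [(h 0 h0).1, (h 0 h0).2]
      have e := (uniqueDiffOn_Icc hL 0 h0).eq_deriv _ d1 d2
      rw [fourExp_zero, fourExp_zero] at e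
      apply hpq
      linear_combination (1/2) * e
    · intro x _
      simp only [fourExp_deriv]
      simp only [fourExp]
      linear_combination (Complex.exp (q * x) + Complex.exp (-(q * x))) * (-hcub)
    · intro x _
      simp only [fourExp_deriv]
      simp only [fourExp]
      linear_combination (Complex.exp (q * x) - Complex.exp (-(q * x))) * (-hcub)
    all_goals
      simp only [fourExp_deriv, fourExp_zero, fourExp_L ep eq]
      ring
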